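/- arXiv:1504.03257 — 4 statements merged into one kernel-verified Lean document; each statement's English description precedes it below -/
import Mathlib

section
/- If a mechanism φ is ex-ante stable, then φ is interim stable; moreover, if φ is ex-ante pairwise stable, then φ is interim pairwise stable. -/
open scoped ENNReal

namespace Unraveling

variable (M W : Type*) [Fintype M] [DecidableEq M] [Fintype W] [DecidableEq W]

/-- A matching between men `M` and women `W`.  `Sum.inl m` denotes man `m`,
`Sum.inr w` denotes woman `w`; `toFun a = a` means agent `a` is unmatched. -/
structure Matching where
  toFun : M ⊕ W → M ⊕ W
  man_range : ∀ m : M, toFun (Sum.inl m) = Sum.inl m ∨ ∃ w : W, toFun (Sum.inl m) = Sum.inr w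
  woman_range : ∀ w : W, toFun (Sum.inr w) = Sum.inr w ∨ ∃ m : M, toFun (Sum.inr w) = Sum.inl m
  mutual_cond : ∀ (m : M) (w : W), toFun (Sum.inl m) = Sum.inr w ↔ toFun (Sum.inr w) = Sum.inl m

/-- A preference profile: each man has a ranking (a bijection onto `{1,…,|W|+1}`,
encoded as an `Equiv` onto `Fin (|W|+1)`) of the women together with the option
(`none`) of remaining unmatched, and symmetrically for women. -/
structure Profile where
  mpref : M → (Option W ≃ Fin (Fintype.card W + 1))
  wpref : W → (Option M ≃ Fin (Fintype.card M + 1))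

variable {M W}

/-- The partner of man `m` under matching `μ` (`none` if unmatched). -/
def Matching.partnerM (μ : Matching M W) (m : M) : Option W :=
  match μ.toFun (Sum.inl m) with
  | Sum.inl _ => none
  | Sum.inr w => some w

/-- The partner of woman `w` under matching `μ` (`none` if unmatched). -/
def Matching.partnerW (μ : Matching M W) (w : W) : Option M :=
  match μ.toFun (Sum.inr w) with
  | Sum.inr _ => none
  | Sum.inl m => some m

/-- The rank (`1` = most preferred) that man `m` assigns to `o` under profile `P`. -/
def mrank (P : Profile M W) (m : M) (o : Option W) : ℕ := (P.mpref m o : ℕ) + 1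

/-- The rank (`1` = most preferred) that woman `w` assigns to `o` under profile `P`. -/
def wrank (P : Profile M W) (w : W) (o : Option M) : ℕ := (P.wpref w o : ℕ) + 1

/-- The rank that agent `a` assigns to his/her partner under matching `μ`. -/
def prank (P : Profile M W) (μ : Matching M W) : M ⊕ W → ℕ
  | Sum.inl m => mrank P m (μ.partnerM m)
  | Sum.inr w => wrank P w (μ.partnerW w)

/-- The rank that agent `a` assigns to remaining unmatched. -/
def urank (P : Profile M W) : M ⊕ W → ℕ
  | Sum.inl m => mrank P m none
  | Sum.inr w => wrank P w none

/-- Stability of a matching at a profile. -/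
def IsStable (P : Profile M W) (μ : Matching M W) : Prop :=
  (∀ a : M ⊕ W, prank P μ a ≤ urank P a) ∧
  (∀ (m : M) (w : W), mrank P m (some w) < prank P μ (Sum.inl m) →
     prank P μ (Sum.inr w) < wrank P w (some m))

/-- A mechanism maps each preference profile to a probability distribution over matchings. -/
abbrev Mechanism (M W : Type*) [Fintype M] [DecidableEq M] [Fintype W] [DecidableEq W] :=
  Profile M W → PMF (Matching M W)

/-- The probability that `p` assigns to the set `s`. -/
noncomputable def prob {α : Type*} (p : PMF α) (s : Set α) : ℝ≥0∞ :=
  ∑' x, s.indicator (fun y => p y) x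

/-- CDF of the rank that agent `a` assigns to his/her random partner, when the
matching is drawn from `p` and the profile is `P`. -/
noncomputable def cdfAt (P : Profile M W) (p : PMF (Matching M W)) (a : M ⊕ W) (n : ℕ) : ℝ≥0∞ :=
  prob p {μ | prank P μ a ≤ n}

/-- `SD F G` : the rank distribution with CDF `F` strictly first-order
stochastically dominates the one with CDF `G`. -/
def SD (F G : ℕ → ℝ≥0∞) : Prop := (∀ n, G n ≤ F n) ∧ ∃ n, G n < F n

/-- A coalition consisting of at most one man and at most one woman. -/
def IsPairCoalition (A' : Set (M ⊕ W)) : Prop :=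
  {m : M | Sum.inl m ∈ A'}.Subsingleton ∧ {w : W | Sum.inr w ∈ A'}.Subsingleton

/-- Coalition `A'` blocks mechanism `φ` ex-post at profile `P`. -/
def BlocksExPost (A' : Set (M ⊕ W)) (φ : Mechanism M W) (P : Profile M W) : Prop :=
  A'.Nonempty ∧ ∃ φ' : Mechanism M W,
    (∀ a ∈ A', prob (φ' P) {μ | μ.toFun a ∈ A'} = 1) ∧
    (∀ a ∈ A', SD (cdfAt P (φ' P) a) (cdfAt P (φ P) a))

def ExPostStable (φ : Mechanism M W) : Prop :=
  ∀ (P : Profile M W) (A' : Set (M ⊕ W)), ¬ BlocksExPost A' φ P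

def ExPostPairwiseStable (φ : Mechanism M W) : Prop :=
  ∀ (P : Profile M W) (A' : Set (M ⊕ W)), IsPairCoalition A' → ¬ BlocksExPost A' φ P

/-- Ex-ante CDF of the rank of agent `a`'s partner under mechanism `φ`, when
the profile is drawn from prior `ψ`. -/
noncomputable def cdfExAnte (ψ : PMF (Profile M W)) (φ : Mechanism M W) (a : M ⊕ W) (n : ℕ) : ℝ≥0∞ :=
  ∑' P, ψ P * cdfAt P (φ P) a n

/-- Coalition `A'` blocks mechanism `φ` ex-ante at prior `ψ`. -/
def BlocksExAnte (A' : Set (M ⊕ W)) (φ : Mechanism M W) (ψ : PMF (Profile M W)) : Prop :=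
  A'.Nonempty ∧ ∃ φ' : Mechanism M W,
    (∀ a ∈ A', (∑' P, ψ P * prob (φ' P) {μ | μ.toFun a ∈ A'}) = 1) ∧
    (∀ a ∈ A', SD (cdfExAnte ψ φ' a) (cdfExAnte ψ φ a))

def ExAnteStableAt (φ : Mechanism M W) (ψ : PMF (Profile M W)) : Prop :=
  ∀ A' : Set (M ⊕ W), ¬ BlocksExAnte A' φ ψ

def ExAnteStable (φ : Mechanism M W) : Prop := ∀ ψ, ExAnteStableAt φ ψ

def ExAntePairwiseStable (φ : Mechanism M W) : Prop :=
  ∀ (ψ : PMF (Profile M W)) (A' : Set (M ⊕ W)), IsPairCoalition A' → ¬ BlocksExAnte A' φ ψ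

/-- `prefEq P P' a` : profiles `P` and `P'` give agent `a` the same preferences. -/
def prefEq (P P' : Profile M W) : M ⊕ W → Prop
  | Sum.inl m => P.mpref m = P'.mpref m
  | Sum.inr w => P.wpref w = P'.wpref w

/-- The event `Y_a(P̃_a)`: profiles in which `a`'s preferences agree with `Pt`
and every other member of the coalition `A'` has preferences in his/her
acceptance set `R`. -/
def interimEvent (A' : Set (M ⊕ W)) (R : (M ⊕ W) → Set (Profile M W)) (a : M ⊕ W)
    (Pt : Profile M W) : Set (Profile M W) :=
  {P | prefEq P Pt a ∧ ∀ a' ∈ A', a' ≠ a → P ∈ R a'}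

/-- CDF of the rank of `a`'s partner under `φ`, with the profile drawn from `ψ`
conditioned on the event `Y`. -/
noncomputable def cdfCond (ψ : PMF (Profile M W)) (Y : Set (Profile M W)) (φ : Mechanism M W)
    (a : M ⊕ W) (n : ℕ) : ℝ≥0∞ :=
  (∑' P, Y.indicator (fun P' => ψ P' * cdfAt P' (φ P') a n) P) / prob ψ Y

/-- Coalition `A'` blocks mechanism `φ` in the interim at prior `ψ`.  Each `R a`
is the set of profiles in which `a`'s preferences are ones at which `a` agrees to
deviate; it is required to depend only on `a`'s own preferences. -/
def BlocksInterim (A' : Set (M ⊕ W)) (φ : Mechanism M W) (ψ : PMF (Profile M W)) : Prop :=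
  A'.Nonempty ∧ ∃ (φ' : Mechanism M W) (R : (M ⊕ W) → Set (Profile M W)),
    (∀ (a : M ⊕ W) (P P' : Profile M W), prefEq P P' a → (P ∈ R a ↔ P' ∈ R a)) ∧
    (∀ a ∈ A', ∀ P : Profile M W, prob (φ' P) {μ | μ.toFun a ∈ A'} = 1) ∧
    (∀ a ∈ A', ∀ Pt : Profile M W,
      Pt ∈ R a ↔ (0 < prob ψ (interimEvent A' R a Pt) ∧
        SD (cdfCond ψ (interimEvent A' R a Pt) φ' a)
           (cdfCond ψ (interimEvent A' R a Pt) φ a))) ∧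
    0 < prob ψ {P | ∀ a ∈ A', P ∈ R a}

def InterimStableAt (φ : Mechanism M W) (ψ : PMF (Profile M W)) : Prop :=
  ∀ A' : Set (M ⊕ W), ¬ BlocksInterim A' φ ψ

def InterimStable (φ : Mechanism M W) : Prop := ∀ ψ, InterimStableAt φ ψ

def InterimPairwiseStable (φ : Mechanism M W) : Prop :=
  ∀ (ψ : PMF (Profile M W)) (A' : Set (M ⊕ W)), IsPairCoalition A' → ¬ BlocksInterim A' φ ψ

/-- `MRanks P m rw ru` : man `m` assigns rank `rw w` to each woman `w` and
rank `ru` to remaining unmatched. -/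
def MRanks (P : Profile M W) (m : M) (rw : W → ℕ) (ru : ℕ) : Prop :=
  (∀ w, mrank P m (some w) = rw w) ∧ mrank P m none = ru

/-- `WRanks P w rm ru` : woman `w` assigns rank `rm m` to each man `m` and
rank `ru` to remaining unmatched. -/
def WRanks (P : Profile M W) (w : W) (rm : M → ℕ) (ru : ℕ) : Prop :=
  (∀ m, wrank P w (some m) = rm m) ∧ wrank P w none = ru

instance (P : Profile M W) (m : M) (rw : W → ℕ) (ru : ℕ) : Decidable (MRanks P m rw ru) :=
  decidable_of_iff ((∀ w, mrank P m (some w) = rw w) ∧ mrank P m none = ru) Iff.rfl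

instance (P : Profile M W) (w : W) (rm : M → ℕ) (ru : ℕ) : Decidable (WRanks P w rm ru) :=
  decidable_of_iff ((∀ m, wrank P w (some m) = rm m) ∧ wrank P w none = ru) Iff.rfl

/-- The perfect matching induced by a bijection `e : M ≃ W`. -/
def matchingOf (e : M ≃ W) : Matching M W where
  toFun a :=
    match a with
    | Sum.inl m => Sum.inr (e m)
    | Sum.inr w => Sum.inl (e.symm w)
  man_range m := Or.inr ⟨e m, rfl⟩
  woman_range w := Or.inr ⟨e.symm w, rfl⟩
  mutual_cond m w := by
    constructor
    · intro h
      simp only [Sum.inr.injEq] at h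
      simp [← h]
    · intro h
      simp only [Sum.inl.injEq] at h
      simp [← h]

/-- `P'` is the permutation of profile `P` obtained by (`σM`, `σW`):
`P_a(a') = P'_{σ(a)}(σ(a'))` for all agents `a` and all `a'` in the domain of `P_a`. -/
def IsPermutedProfile (σM : Equiv.Perm M) (σW : Equiv.Perm W) (P P' : Profile M W) : Prop :=
  (∀ m w, P'.mpref (σM m) (some (σW w)) = P.mpref m (some w)) ∧
  (∀ m, P'.mpref (σM m) none = P.mpref m none) ∧
  (∀ w m, P'.wpref (σW w) (some (σM m)) = P.wpref w (some m)) ∧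
  (∀ w, P'.wpref (σW w) none = P.wpref w none)

/-- Probability (jointly over the profile drawn from `ψ` and the internal
randomization of `φ`) that agent `a` is assigned a partner of rank exactly `k`. -/
noncomputable def probRankEq (ψ : PMF (Profile M W)) (φ : Mechanism M W) (a : M ⊕ W) (k : ℕ) : ℝ≥0∞ :=
  ∑' P, ψ P * prob (φ P) {μ | prank P μ a = k}

/-- CDF of a distribution on ranks `{1,2,3}` with probabilities `q1`, `q2`, `q3`. -/
def cdf3 (q1 q2 q3 : ℝ) (n : ℕ) : ℝ :=
  (if 1 ≤ n then q1 else 0) + (if 2 ≤ n then q2 else 0) + (if 3 ≤ n then q3 else 0)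

/-- Strict first-order stochastic dominance for real-valued rank CDFs. -/
def SDR (F G : ℕ → ℝ) : Prop := (∀ n, G n ≤ F n) ∧ ∃ n, G n < F n

end Unraveling

namespace Unraveling

variable {M W : Type*} [Fintype M] [DecidableEq M] [Fintype W] [DecidableEq W]

/-- The preference relation of agent `a` in profile `P`. -/
def agentPref (a : M ⊕ W) (P : Profile M W) :
    (Option W ≃ Fin (Fintype.card W + 1)) ⊕ (Option M ≃ Fin (Fintype.card M + 1)) :=
  match a with
  | Sum.inl m => Sum.inl (P.mpref m)
  | Sum.inr w => Sum.inr (P.wpref w)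

theorem agentPref_eq_iff (a : M ⊕ W) (P P' : Profile M W) :
    agentPref a P = agentPref a P' ↔ prefEq P P' a := by
  cases a <;> simp [agentPref, prefEq]

theorem prob_le_one {α : Type*} (p : PMF α) (s : Set α) : prob p s ≤ 1 := by
  rw [← p.tsum_coe]
  exact ENNReal.tsum_le_tsum fun x => Set.indicator_le_self' (fun _ _ => zero_le) x

theorem mul_le_self' (ψ : PMF (Profile M W)) (φ : Mechanism M W) (a : M ⊕ W) (n : ℕ)
    (P : Profile M W) : ψ P * cdfAt P (φ P) a n ≤ ψ P :=
  mul_le_of_le_one_right' (prob_le_one _ _)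

theorem sum_ne_top (ψ : PMF (Profile M W)) (φ : Mechanism M W) (a : M ⊕ W) (n : ℕ)
    (E : Set (Profile M W)) :
    (∑' P, E.indicator (fun P' => ψ P' * cdfAt P' (φ P') a n) P) ≠ ∞ := by
  refine ne_top_of_le_ne_top ENNReal.one_ne_top ?_
  rw [← ψ.tsum_coe]
  refine ENNReal.tsum_le_tsum fun P => ?_
  exact (Set.indicator_le_self' (fun _ _ => zero_le) P).trans (mul_le_self' ψ φ a n P)

/-- Splitting a sum over an event into a sum over the preference relations of one agent. -/
theorem sum_split (f : Profile M W → ℝ≥0∞) (a : M ⊕ W) :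
    ∑' P, f P = ∑' t, ∑' P, (agentPref a ⁻¹' {t}).indicator f P := by
  rw [← ENNReal.tsum_fiberwise f (agentPref a)]
  exact tsum_congr fun t => tsum_subtype (agentPref a ⁻¹' {t}) f

theorem blocks_of_interim (A' : Set (M ⊕ W)) (φ : Mechanism M W) (ψ : PMF (Profile M W))
    (h : BlocksInterim A' φ ψ) : ∃ ψ', BlocksExAnte A' φ ψ' := by
  obtain ⟨hne, φ', R, hR, hfeas, hiff, hpos⟩ := h
  set E : Set (Profile M W) := {P | ∀ a ∈ A', P ∈ R a} with hE
  have hex : ∃ P ∈ E, P ∈ ψ.support := by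
    by_contra hcon
    push Not at hcon
    refine hpos.ne' ?_
    unfold prob
    rw [ENNReal.tsum_eq_zero]
    intro P
    by_cases hP : P ∈ E
    · simpa [hP, PMF.mem_support_iff] using hcon P hP
    · simp [hP]
  obtain ⟨P0, hP0, hP0s⟩ := hex
  have hY : ∀ a ∈ A', ∀ Pt ∈ E,
      agentPref a ⁻¹' {agentPref a Pt} ∩ E = interimEvent A' R a Pt := by
    intro a ha Pt hPt
    ext P
    simp only [Set.mem_inter_iff, Set.mem_preimage, Set.mem_singleton_iff, agentPref_eq_iff,
      interimEvent, Set.mem_setOf_eq]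
    constructor
    · rintro ⟨h1, h2⟩
      exact ⟨h1, fun a' ha' _ => h2 a' ha'⟩
    · rintro ⟨h1, h2⟩
      refine ⟨h1, fun a' ha' => ?_⟩
      by_cases haa : a' = a
      · subst haa
        exact (hR _ _ _ h1).2 (hPt _ ha')
      · exact h2 a' ha' haa
  have key : ∀ a ∈ A', SD
      (fun n => ∑' P, E.indicator (fun P' => ψ P' * cdfAt P' (φ' P') a n) P)
      (fun n => ∑' P, E.indicator (fun P' => ψ P' * cdfAt P' (φ P') a n) P) := by
    intro a ha
    have hSD : ∀ Pt ∈ E, SD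
        (fun n => ∑' P, (interimEvent A' R a Pt).indicator
          (fun P' => ψ P' * cdfAt P' (φ' P') a n) P)
        (fun n => ∑' P, (interimEvent A' R a Pt).indicator
          (fun P' => ψ P' * cdfAt P' (φ P') a n) P) := by
      intro Pt hPt
      obtain ⟨hp, h1, n, h2⟩ := (hiff a ha Pt).1 (hPt a ha)
      have hp1 : prob ψ (interimEvent A' R a Pt) ≠ ∞ :=
        ne_top_of_le_ne_top ENNReal.one_ne_top (prob_le_one _ _)
      have hi0 : (prob ψ (interimEvent A' R a Pt))⁻¹ ≠ 0 := ENNReal.inv_ne_zero.2 hp1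
      have hi1 : (prob ψ (interimEvent A' R a Pt))⁻¹ ≠ ∞ := ENNReal.inv_ne_top.2 hp.ne'
      refine ⟨fun k => ?_, n, ?_⟩
      · have := h1 k
        simp only [cdfCond, div_eq_mul_inv] at this
        exact (ENNReal.mul_le_mul_iff_left hi0 hi1).1 this
      · simp only [cdfCond, div_eq_mul_inv] at h2
        exact (ENNReal.mul_lt_mul_iff_left hi0 hi1).1 h2
    have hle : ∀ n t,
        ∑' P, (agentPref a ⁻¹' {t}).indicator
          (E.indicator (fun P' => ψ P' * cdfAt P' (φ P') a n)) P ≤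
        ∑' P, (agentPref a ⁻¹' {t}).indicator
          (E.indicator (fun P' => ψ P' * cdfAt P' (φ' P') a n)) P := by
      intro n t
      simp only [Set.indicator_indicator]
      by_cases ht : ∃ Pt ∈ E, agentPref a Pt = t
      · obtain ⟨Pt, hPt, rfl⟩ := ht
        rw [hY a ha Pt hPt]
        exact (hSD Pt hPt).1 n
      · have : agentPref a ⁻¹' {t} ∩ E = ∅ := by
          ext P
          simp only [Set.mem_inter_iff, Set.mem_preimage, Set.mem_singleton_iff,
            Set.mem_empty_iff_false, iff_false]
          exact fun hc => ht ⟨P, hc.2, hc.1⟩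
        simp [this]
    refine ⟨fun n => ?_, ?_⟩
    · dsimp only
      rw [sum_split _ a, sum_split (E.indicator (fun P' => ψ P' * cdfAt P' (φ' P') a n)) a]
      exact ENNReal.tsum_le_tsum (hle n)
    · obtain ⟨n, hn⟩ := (hSD P0 hP0).2
      refine ⟨n, ?_⟩
      have hfin := sum_ne_top ψ φ a n E
      dsimp only
      rw [sum_split _ a] at hfin ⊢
      rw [sum_split (E.indicator (fun P' => ψ P' * cdfAt P' (φ' P') a n)) a]
      refine ENNReal.tsum_lt_tsum (i := agentPref a P0) hfin (hle n) ?_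
      simp only [Set.indicator_indicator]
      rw [hY a ha P0 hP0]
      exact hn
  have hEp1 : prob ψ E ≠ ∞ := ne_top_of_le_ne_top ENNReal.one_ne_top (prob_le_one _ _)
  have hi0 : (prob ψ E)⁻¹ ≠ 0 := ENNReal.inv_ne_zero.2 hEp1
  have hi1 : (prob ψ E)⁻¹ ≠ ∞ := ENNReal.inv_ne_top.2 hpos.ne'
  have hcdf : ∀ (χ : Mechanism M W) a n,
      cdfExAnte (ψ.filter E ⟨P0, hP0, hP0s⟩) χ a n =
      (∑' P, E.indicator (fun P' => ψ P' * cdfAt P' (χ P') a n) P) * (prob ψ E)⁻¹ := by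
    intro χ a n
    unfold cdfExAnte
    rw [← ENNReal.tsum_mul_right]
    refine tsum_congr fun P => ?_
    rw [PMF.filter_apply]
    by_cases hP : P ∈ E
    · simp only [Set.indicator_of_mem hP]
      change ψ P * (prob ψ E)⁻¹ * _ = _
      ring
    · simp [hP]
  refine ⟨ψ.filter E ⟨P0, hP0, hP0s⟩, hne, φ', ?_, ?_⟩
  · intro a ha
    simp only [hfeas a ha, mul_one]
    exact PMF.tsum_coe _
  · intro a ha
    obtain ⟨h1, n, h2⟩ := key a ha
    refine ⟨fun k => ?_, n, ?_⟩
    · rw [hcdf, hcdf]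
      exact (ENNReal.mul_le_mul_iff_left hi0 hi1).2 (h1 k)
    · rw [hcdf, hcdf]
      exact (ENNReal.mul_lt_mul_iff_left hi0 hi1).2 h2

/-- If a mechanism `φ` is ex-ante stable then it is interim stable;
moreover, if `φ` is ex-ante pairwise stable then it is interim pairwise stable. -/
theorem exAnteStable_imp_interimStable (φ : Mechanism M W) :
    (ExAnteStable φ → InterimStable φ) ∧
    (ExAntePairwiseStable φ → InterimPairwiseStable φ) := by
  constructor
  · intro h ψ A' hb
    obtain ⟨ψ', hb'⟩ := blocks_of_interim A' φ ψ hb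
    exact h ψ' A' hb'
  · intro h ψ A' hA hb
    obtain ⟨ψ', hb'⟩ := blocks_of_interim A' φ ψ hb
    exact h ψ' A' hA hb'

end Unraveling
end

section
/- If a mechanism φ is interim stable, then φ is ex-post stable; moreover, if φ is interim pairwise stable, then φ is ex-post pairwise stable. -/
open scoped ENNReal

namespace Unraveling

variable {M W : Type*} [Fintype M] [DecidableEq M] [Fintype W] [DecidableEq W]

theorem prefEq_refl' (P : Profile M W) (a : M ⊕ W) : prefEq P P a := by
  cases a <;> simp [prefEq]

theorem prefEq_congr (P P' Q : Profile M W) (a : M ⊕ W) (h : prefEq P P' a) :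
    prefEq P Q a ↔ prefEq P' Q a := by
  cases a <;> simp only [prefEq] at * <;> rw [h]

theorem prefEq_comm' (P P' : Profile M W) (a : M ⊕ W) : prefEq P P' a ↔ prefEq P' P a := by
  cases a <;> simp only [prefEq] <;> exact eq_comm

theorem prob_pure_mem {α : Type*} (x : α) (s : Set α) (h : x ∈ s) :
    prob (PMF.pure x) s = 1 := by
  unfold prob
  rw [tsum_eq_single x]
  · simp [h]
  · intro y hy
    simp [Set.indicator, hy]

theorem prob_pure_notMem {α : Type*} (x : α) (s : Set α) (h : x ∉ s) :
    prob (PMF.pure x) s = 0 := by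
  unfold prob
  rw [tsum_eq_single x]
  · simp [h]
  · intro y hy
    simp [Set.indicator, hy]

theorem cdfCond_pure (P : Profile M W) (Y : Set (Profile M W)) (h : P ∈ Y) (φ : Mechanism M W)
    (a : M ⊕ W) : cdfCond (PMF.pure P) Y φ a = cdfAt P (φ P) a := by
  funext n
  unfold cdfCond
  rw [prob_pure_mem P Y h, tsum_eq_single P]
  · simp [h]
  · intro y hy
    simp [Set.indicator, hy]

/-- An ex-post block at `P` is an interim block at the point-mass prior on `P`. -/
theorem BlocksExPost.blocksInterim {A' : Set (M ⊕ W)} {φ : Mechanism M W} {P : Profile M W}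
    (h : BlocksExPost A' φ P) : BlocksInterim A' φ (PMF.pure P) := by
  obtain ⟨hne, φ', h1, h2⟩ := h
  refine ⟨hne, fun _ => φ' P, fun a => {Q | prefEq Q P a}, ?_, ?_, ?_, ?_⟩
  · intro a Q Q' hQ
    exact prefEq_congr Q Q' P a hQ
  · intro a ha _
    exact h1 a ha
  · intro a ha Pt
    by_cases hp : prefEq Pt P a
    · have hmem : P ∈ interimEvent A' (fun a => {Q | prefEq Q P a}) a Pt :=
        ⟨(prefEq_comm' _ _ _).1 hp, fun a' _ _ => prefEq_refl' P a'⟩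
      rw [prob_pure_mem P _ hmem, cdfCond_pure P _ hmem, cdfCond_pure P _ hmem]
      exact ⟨fun _ => ⟨one_pos, h2 a ha⟩, fun _ => hp⟩
    · have hmem : P ∉ interimEvent A' (fun a => {Q | prefEq Q P a}) a Pt :=
        fun hm => hp ((prefEq_comm' _ _ _).1 hm.1)
      rw [prob_pure_notMem P _ hmem]
      exact ⟨fun hq => absurd hq hp, fun hq => absurd hq.1 (lt_irrefl _)⟩
  · rw [prob_pure_mem]
    · exact one_pos
    · exact fun a _ => prefEq_refl' P a

/-- If a mechanism `φ` is interim stable then it is ex-post stable;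
moreover, if `φ` is interim pairwise stable then it is ex-post pairwise stable. -/
theorem interimStable_imp_exPostStable (φ : Mechanism M W) :
    (InterimStable φ → ExPostStable φ) ∧
    (InterimPairwiseStable φ → ExPostPairwiseStable φ) := by
  exact ⟨fun h P A' hb => h (PMF.pure P) A' hb.blocksInterim,
    fun h P A' hA hb => h (PMF.pure P) A' hA hb.blocksInterim⟩

end Unraveling
end

section
/- Let M = {m1, m2, m3}, W = {w1, w2, w3}, and let P be the preference profile in which every agent ranks being unmatched last and: m1 ranks w1, w2, w3; m2 ranks w1, w3, w2; m3 ranks w2, w1, w3; w1 ranks m3, m2, m1; w2 ranks m2, m1, m3; w3 ranks m3, m2, m1. Suppose μ is a random matching (a probability distribution over the six perfect matchings of M with W) such that for every agent a, the rank P_a(μ(a)) weakly first-order stochastically dominates the rank of a's partner under the uniform distribution over the six perfect matchings. Then Pr(μ = {m1w1, m2w2, m3w3}) = Pr(μ = {m1w2, m2w3, m3w1}) = Pr(μ = {m1w3, m2w1, m3w2}) and Pr(μ = {m1w1, m2w3, m3w2}) = Pr(μ = {m1w2, m2w1, m3w3}) = Pr(μ = {m1w3, m2w2, m3w1}); consequently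 every agent receives their first, second, and third choice each with probability exactly 1/3, so μ does not strictly dominate the uniform random matching for any agent. -/
open scoped ENNReal

namespace Unraveling

theorem perms3 : (Finset.univ : Finset (Fin 3 ≃ Fin 3)) =
    {Equiv.refl (Fin 3), finRotate 3, (finRotate 3).trans (finRotate 3),
      Equiv.swap 1 2, Equiv.swap 0 1, Equiv.swap 0 2} := by decide

theorem sum_perms3 (f : (Fin 3 ≃ Fin 3) → ℝ) :
    ∑ e, f e = f (Equiv.refl (Fin 3)) + f (finRotate 3) +
      f ((finRotate 3).trans (finRotate 3)) + f (Equiv.swap 1 2) + f (Equiv.swap 0 1) +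
      f (Equiv.swap 0 2) := by
  rw [perms3, Finset.sum_insert (by decide), Finset.sum_insert (by decide),
    Finset.sum_insert (by decide), Finset.sum_insert (by decide),
    Finset.sum_insert (by decide), Finset.sum_singleton]
  ring

theorem matchingOf_inj : Function.Injective
    (matchingOf : (Fin 3 ≃ Fin 3) → Matching (Fin 3) (Fin 3)) := by
  intro e e' h
  ext1 m
  have h2 := congrArg (fun μ => Matching.toFun μ (Sum.inl m)) h
  simpa [matchingOf] using h2

theorem matchingOf_perfect (e : Fin 3 ≃ Fin 3) (a : Fin 3 ⊕ Fin 3) :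
    (matchingOf e).toFun a ≠ a := by
  cases a <;> simp [matchingOf]

theorem matchingOf_surj (μ : Matching (Fin 3) (Fin 3)) (h : ∀ a, μ.toFun a ≠ a) :
    ∃ e, matchingOf e = μ := by
  have h1 : ∀ m, ∃ w, μ.toFun (Sum.inl m) = Sum.inr w := fun m =>
    (μ.man_range m).resolve_left (h _)
  have h2 : ∀ w, ∃ m, μ.toFun (Sum.inr w) = Sum.inl m := fun w =>
    (μ.woman_range w).resolve_left (h _)
  choose f hf using h1
  choose g hg using h2
  have hgf : ∀ m, g (f m) = m := fun m => by
    have := (μ.mutual_cond m (f m)).1 (hf m)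
    rw [hg] at this
    exact Sum.inl.inj this
  have hfg : ∀ w, f (g w) = w := fun w => by
    have := (μ.mutual_cond (g w) w).2 (hg w)
    rw [hf] at this
    exact Sum.inr.inj this
  refine ⟨⟨f, g, hgf, hfg⟩, ?_⟩
  have : (matchingOf (⟨f, g, hgf, hfg⟩ : Fin 3 ≃ Fin 3)).toFun = μ.toFun := by
    funext a
    cases a with
    | inl m => exact (hf m).symm
    | inr w => exact (hg w).symm
  cases μ
  simp only [matchingOf] at this ⊢
  congr

theorem prob_ne_top {α : Type*} (p : PMF α) (s : Set α) : prob p s ≠ ⊤ := by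
  have : prob p s ≤ ∑' x, p x :=
    ENNReal.tsum_le_tsum fun x => Set.indicator_le_self _ _ _
  rw [p.tsum_coe] at this
  exact ne_top_of_le_ne_top ENNReal.one_ne_top this

open Classical in
theorem prob_eq (p : PMF (Matching (Fin 3) (Fin 3)))
    (hp : ∀ μ, ¬ (∀ a, μ.toFun a ≠ a) → p μ = 0) (s : Set (Matching (Fin 3) (Fin 3))) :
    (prob p s).toReal =
      ∑ e : Fin 3 ≃ Fin 3, if matchingOf e ∈ s then (p (matchingOf e)).toReal else 0 := by
  have h : prob p s = ∑ e : Fin 3 ≃ Fin 3, s.indicator (fun y => p y) (matchingOf e) := by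
    unfold prob
    rw [← tsum_fintype (L := .unconditional _)]
    refine (matchingOf_inj.tsum_eq ?_).symm
    intro μ hμ
    have h0 : p μ ≠ 0 := fun h0 => hμ (by by_cases hs : μ ∈ s <;> simp [hs, h0])
    exact matchingOf_surj μ (not_not.1 fun hc => h0 (hp μ hc))
  rw [h, ENNReal.toReal_sum]
  · refine Finset.sum_congr rfl fun e _ => ?_
    by_cases hs : matchingOf e ∈ s <;> simp [hs]
  · intro e _
    by_cases hs : matchingOf e ∈ s <;> simp [hs, p.apply_ne_top]

theorem prank_inl (P : Profile (Fin 3) (Fin 3)) (e : Fin 3 ≃ Fin 3) (m : Fin 3) :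
    prank P (matchingOf e) (Sum.inl m) = mrank P m (some (e m)) := rfl

theorem prank_inr (P : Profile (Fin 3) (Fin 3)) (e : Fin 3 ≃ Fin 3) (w : Fin 3) :
    prank P (matchingOf e) (Sum.inr w) = wrank P w (some (e.symm w)) := rfl

/-- Rank table of the example. -/
def tbl : Fin 3 ⊕ Fin 3 → (Fin 3 ≃ Fin 3) → ℕ
  | Sum.inl m, e => (![![1, 2, 3], ![1, 3, 2], ![2, 1, 3]] : Fin 3 → Fin 3 → ℕ) m (e m)
  | Sum.inr w, e => (![![3, 2, 1], ![2, 1, 3], ![3, 2, 1]] : Fin 3 → Fin 3 → ℕ) w (e.symm w)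

/-- Rank vectors along the six permutations. -/
def row : Fin 3 ⊕ Fin 3 → Fin 6 → ℕ
  | Sum.inl m => (![![1, 2, 3, 1, 2, 3], ![3, 2, 1, 2, 1, 3], ![3, 2, 1, 1, 3, 2]] :
      Fin 3 → Fin 6 → ℕ) m
  | Sum.inr w => (![![3, 1, 2, 3, 2, 1], ![1, 2, 3, 3, 2, 1], ![1, 2, 3, 2, 1, 3]] :
      Fin 3 → Fin 6 → ℕ) w

theorem tbl_row : ∀ a, tbl a (Equiv.refl (Fin 3)) = row a 0 ∧ tbl a (finRotate 3) = row a 1 ∧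
    tbl a ((finRotate 3).trans (finRotate 3)) = row a 2 ∧ tbl a (Equiv.swap 1 2) = row a 3 ∧
    tbl a (Equiv.swap 0 1) = row a 4 ∧ tbl a (Equiv.swap 0 2) = row a 5 := by
  decide

/-- For the profile `P` of Example 1, any random matching `q`
supported on perfect matchings whose induced rank distribution weakly first-order
stochastically dominates, for every agent, the one induced by the uniform random
perfect matching `u`, must put equal probability on each of the two orbits of
matchings listed; consequently every agent gets each of his/her first, second and
third choices with probability exactly `1/3`, and `q` strictly dominates the
uniform random matching for no agent. -/
theorem uniform_is_undominated_example1 (P : Profile (Fin 3) (Fin 3))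
    (hm1 : MRanks P 0 ![1, 2, 3] 4) (hm2 : MRanks P 1 ![1, 3, 2] 4)
    (hm3 : MRanks P 2 ![2, 1, 3] 4)
    (hw1 : WRanks P 0 ![3, 2, 1] 4) (hw2 : WRanks P 1 ![2, 1, 3] 4)
    (hw3 : WRanks P 2 ![3, 2, 1] 4)
    (u q : PMF (Matching (Fin 3) (Fin 3)))
    (hu : ∀ μ, u μ = if ∀ a, μ.toFun a ≠ a then (6 : ℝ≥0∞)⁻¹ else 0)
    (hq : ∀ μ, ¬ (∀ a, μ.toFun a ≠ a) → q μ = 0)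
    (hdom : ∀ (a : Fin 3 ⊕ Fin 3) (n : ℕ), cdfAt P u a n ≤ cdfAt P q a n) :
    (q (matchingOf (Equiv.refl (Fin 3))) = q (matchingOf (finRotate 3)) ∧
      q (matchingOf (finRotate 3)) = q (matchingOf ((finRotate 3).trans (finRotate 3)))) ∧
    (q (matchingOf (Equiv.swap 1 2)) = q (matchingOf (Equiv.swap 0 1)) ∧
      q (matchingOf (Equiv.swap 0 1)) = q (matchingOf (Equiv.swap 0 2))) ∧
    (∀ (a : Fin 3 ⊕ Fin 3), ∀ k ∈ ({1, 2, 3} : Set ℕ),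
      prob q {μ | prank P μ a = k} = (3 : ℝ≥0∞)⁻¹) ∧
    (∀ a : Fin 3 ⊕ Fin 3, ¬ SD (cdfAt P q a) (cdfAt P u a)) := by
  classical
  have hr : ∀ a e, prank P (matchingOf e) a = tbl a e := by
    intro a e
    rcases a with m | w
    · rw [prank_inl]
      fin_cases m
      · exact hm1.1 _
      · exact hm2.1 _
      · exact hm3.1 _
    · rw [prank_inr]
      fin_cases w
      · exact hw1.1 _
      · exact hw2.1 _
      · exact hw3.1 _
  have key : ∀ (p : PMF (Matching (Fin 3) (Fin 3))),
      (∀ μ, ¬ (∀ a, μ.toFun a ≠ a) → p μ = 0) → ∀ (a : Fin 3 ⊕ Fin 3) (S : ℕ → Prop),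
      (prob p {μ | S (prank P μ a)}).toReal =
        (if S (row a 0) then (p (matchingOf (Equiv.refl (Fin 3)))).toReal else 0) +
        (if S (row a 1) then (p (matchingOf (finRotate 3))).toReal else 0) +
        (if S (row a 2) then (p (matchingOf ((finRotate 3).trans (finRotate 3)))).toReal else 0) +
        (if S (row a 3) then (p (matchingOf (Equiv.swap 1 2))).toReal else 0) +
        (if S (row a 4) then (p (matchingOf (Equiv.swap 0 1))).toReal else 0) +
        (if S (row a 5) then (p (matchingOf (Equiv.swap 0 2))).toReal else 0) := by
    intro p hp a S
    obtain ⟨h0, h1, h2, h3, h4, h5⟩ := tbl_row a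
    rw [prob_eq p hp, sum_perms3]
    simp only [Set.mem_setOf_eq, hr, h0, h1, h2, h3, h4, h5]
  have hu0 : ∀ μ, ¬ (∀ a, μ.toFun a ≠ a) → u μ = 0 := fun μ h => by rw [hu, if_neg h]
  have hu1 : ∀ e, (u (matchingOf e)).toReal = 1 / 6 := fun e => by
    rw [hu, if_pos (matchingOf_perfect e)]; simp
  have hd : ∀ a n, (cdfAt P u a n).toReal ≤ (cdfAt P q a n).toReal := fun a n =>
    ENNReal.toReal_mono (prob_ne_top _ _) (hdom a n)
  have htot := key q hq (Sum.inl 0) (fun _ => True)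
  have hone : prob q {μ | True} = 1 := by
    simp [prob, q.tsum_coe]
  rw [hone] at htot
  simp only [if_true, ENNReal.toReal_one] at htot
  have ku := fun a n => key u hu0 a (fun r => r ≤ n)
  have kq := fun a n => key q hq a (fun r => r ≤ n)
  have ke := fun a k => key q hq a (fun r => r = k)
  have hineq := fun a n => (ku a n).symm.trans_le ((hd a n).trans_eq (kq a n))
  simp only [hu1] at hineq ku
  have e1 := hineq (Sum.inl 0) 1
  have e2 := hineq (Sum.inl 1) 1
  have e3 := hineq (Sum.inl 2) 1
  have e4 := hineq (Sum.inr 0) 1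
  have e5 := hineq (Sum.inr 0) 2
  have e6 := hineq (Sum.inr 1) 1
  have e7 := hineq (Sum.inr 1) 2
  have e8 := hineq (Sum.inl 1) 2
  have e9 := hineq (Sum.inl 2) 2
  have e10 := hineq (Sum.inr 2) 1
  have e11 := hineq (Sum.inr 2) 2
  have e12 := hineq (Sum.inl 0) 2
  clear hineq
  simp [row] at e1 e2 e3 e4 e5 e6 e7 e8 e9 e10 e11 e12
  have inj : ∀ μ ν, (q μ).toReal = (q ν).toReal → q μ = q ν := fun μ ν h =>
    (ENNReal.toReal_eq_toReal_iff' (q.apply_ne_top _) (q.apply_ne_top _)).1 h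
  generalize ha : (q (matchingOf (Equiv.refl (Fin 3)))).toReal = x0 at *
  generalize hb : (q (matchingOf (finRotate 3))).toReal = x1 at *
  generalize hc : (q (matchingOf ((finRotate 3).trans (finRotate 3)))).toReal = x2 at *
  generalize hdd : (q (matchingOf (Equiv.swap 1 2))).toReal = x3 at *
  generalize he : (q (matchingOf (Equiv.swap 0 1))).toReal = x4 at *
  generalize hf : (q (matchingOf (Equiv.swap 0 2))).toReal = x5 at *
  have r1 : x1 = x0 := by linarith
  have r2 : x2 = x0 := by linarith
  have r4 : x4 = x3 := by linarith
  have r5 : x5 = x3 := by linarith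
  have r6 : x3 = 1 / 3 - x0 := by linarith
  subst r1 r2 r4 r5 r6
  have third : ∀ (a : Fin 3 ⊕ Fin 3), ∀ k ∈ ({1, 2, 3} : Set ℕ),
      prob q {μ | prank P μ a = k} = (3 : ℝ≥0∞)⁻¹ := by
    intro a k hk
    rw [← ENNReal.toReal_eq_toReal_iff' (prob_ne_top _ _) (by simp), ke]
    rcases hk with rfl | rfl | rfl <;> rcases a with a | a <;> fin_cases a <;>
      simp [row]
  refine ⟨⟨inj _ _ (by rw [ha, hb]), inj _ _ (by rw [hb, hc])⟩,
    ⟨inj _ _ (by rw [hdd, he]), inj _ _ (by rw [he, hf])⟩, third, ?_⟩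
  rintro a ⟨-, n, hn⟩
  refine hn.ne ?_
  unfold cdfAt
  rw [← ENNReal.toReal_eq_toReal_iff' (prob_ne_top _ _) (prob_ne_top _ _), ku, kq]
  rcases Nat.lt_or_ge n 3 with h | h
  · interval_cases n <;> rcases a with a | a <;> fin_cases a <;> simp [row] <;> ring
  · have h1 : 1 ≤ n := by omega
    have h2 : 2 ≤ n := by omega
    rcases a with a | a <;> fin_cases a <;> simp [row, h, h1, h2] <;> ring

end Unraveling
end

section
/- Let M = {m1, m2, m3}, W = {w1, w2, w3}, and let P be the preference profile in which every agent ranks being unmatched last and: m1 ranks w1, w2, w3; m2 ranks w1, w3, w2; m3 ranks w3, w1, w2; w1 ranks m1, m2, m3; w2 ranks m1, m3, m2; w3 ranks m3, m1, m2. If φ is an ex-post pairwise stable mechanism, then for every permutation σ of M ∪ W with σ(M) = M and σ(W) = W, letting P' be the permutation of P obtained by σ, the mechanism output φ(P') equals the matching {σ(m1)σ(w1), σ(m2)σ(w2), σ(m3)σ(w3)} with probability 1; in particular, at every permutation of P, exactly four agents receive their first choice and two agents receive their third choice, with certainty. -/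
open scoped ENNReal

namespace Unraveling

theorem prob_eq_outer {α : Type*} (p : PMF α) (s : Set α) : prob p s = p.toOuterMeasure s := by
  rw [PMF.toOuterMeasure_apply]; rfl

theorem sd_pure (P : Profile (Fin 3) (Fin 3)) (p : PMF (Matching (Fin 3) (Fin 3)))
    (ν μ₀ : Matching (Fin 3) (Fin 3)) (a : Fin 3 ⊕ Fin 3)
    (hle : ∀ μ ∈ p.support, prank P ν a ≤ prank P μ a)
    (h0 : μ₀ ∈ p.support) (hlt : prank P ν a < prank P μ₀ a) :
    SD (cdfAt P (PMF.pure ν) a) (cdfAt P p a) := by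
  have hone : ∀ n, prank P ν a ≤ n → cdfAt P (PMF.pure ν) a n = 1 := by
    intro n hn
    rw [cdfAt, prob_eq_outer, PMF.toOuterMeasure_apply_eq_one_iff, PMF.support_pure]
    simpa using hn
  have hub : ∀ n, cdfAt P p a n ≤ 1 := by
    intro n
    rw [cdfAt, prob_eq_outer, PMF.toOuterMeasure_apply, ← p.tsum_coe]
    exact ENNReal.tsum_le_tsum fun x => Set.indicator_le_self _ _ x
  refine ⟨fun n => ?_, prank P ν a, ?_⟩
  · by_cases hn : prank P ν a ≤ n
    · rw [hone n hn]; exact hub n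
    · have : cdfAt P p a n = 0 := by
        rw [cdfAt, prob_eq_outer, PMF.toOuterMeasure_apply_eq_zero_iff, Set.disjoint_left]
        intro μ hμ h
        exact hn ((hle μ hμ).trans h)
      rw [this]; exact zero_le
  · rw [hone _ le_rfl]
    refine lt_of_le_of_ne (hub _) fun h => ?_
    rw [cdfAt, prob_eq_outer, PMF.toOuterMeasure_apply_eq_one_iff] at h
    exact absurd (h h0) (not_le.2 hlt)

theorem prank_inl_eq {P : Profile (Fin 3) (Fin 3)} {μ ν : Matching (Fin 3) (Fin 3)} {m w : Fin 3}
    (hν : ν.toFun (Sum.inl m) = Sum.inr w)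
    (h : prank P ν (Sum.inl m) = prank P μ (Sum.inl m)) : μ.toFun (Sum.inl m) = Sum.inr w := by
  simp only [prank, mrank, Nat.add_right_cancel_iff, Fin.val_inj, (P.mpref m).injective.eq_iff,
    Matching.partnerM, hν] at h
  split at h <;> simp_all

theorem prank_inr_eq {P : Profile (Fin 3) (Fin 3)} {μ ν : Matching (Fin 3) (Fin 3)} {m w : Fin 3}
    (hν : ν.toFun (Sum.inr w) = Sum.inl m)
    (h : prank P ν (Sum.inr w) = prank P μ (Sum.inr w)) : μ.toFun (Sum.inr w) = Sum.inl m := by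
  simp only [prank, wrank, Nat.add_right_cancel_iff, Fin.val_inj, (P.wpref w).injective.eq_iff,
    Matching.partnerW, hν] at h
  split at h <;> simp_all

theorem forced {φ : Mechanism (Fin 3) (Fin 3)} (hφ : ExPostPairwiseStable φ)
    (P : Profile (Fin 3) (Fin 3)) (ν : Matching (Fin 3) (Fin 3)) (m w : Fin 3)
    (hν : ν.toFun (Sum.inl m) = Sum.inr w)
    (h1 : ∀ μ ∈ (φ P).support, prank P ν (Sum.inl m) ≤ prank P μ (Sum.inl m))
    (h2 : ∀ μ ∈ (φ P).support, prank P ν (Sum.inr w) ≤ prank P μ (Sum.inr w)) :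
    ∀ μ ∈ (φ P).support, μ.toFun (Sum.inl m) = Sum.inr w := by
  intro μ hμ
  by_contra hne
  have hν' := (ν.mutual_cond m w).1 hν
  refine hφ P {Sum.inl m, Sum.inr w} ⟨?_, ?_⟩ ⟨⟨Sum.inl m, by simp⟩, fun _ => PMF.pure ν, ?_, ?_⟩
  · intro x hx y hy; simp at hx hy; rw [hx, hy]
  · intro x hx y hy; simp at hx hy; rw [hx, hy]
  · intro a ha
    rw [prob_eq_outer, PMF.toOuterMeasure_apply_eq_one_iff, PMF.support_pure]
    rcases ha with rfl | rfl <;> simp [hν, hν']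
  · intro a ha
    rcases ha with rfl | rfl
    · exact sd_pure P _ ν μ _ h1 hμ
        (lt_of_le_of_ne (h1 μ hμ) fun h => hne (prank_inl_eq hν h))
    · exact sd_pure P _ ν μ _ h2 hμ
        (lt_of_le_of_ne (h2 μ hμ) fun h => hne ((μ.mutual_cond m w).2 (prank_inr_eq hν' h)))

theorem matching_eq (μ : Matching (Fin 3) (Fin 3)) (σM σW : Equiv.Perm (Fin 3))
    (h : ∀ i, μ.toFun (Sum.inl (σM i)) = Sum.inr (σW i)) :
    μ = matchingOf (σM.symm.trans σW) := by
  have : μ.toFun = (matchingOf (σM.symm.trans σW)).toFun := by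
    funext a
    rcases a with m | w
    · obtain ⟨i, rfl⟩ := σM.surjective m
      simp [h, matchingOf]
    · obtain ⟨i, rfl⟩ := σW.surjective w
      simp [(μ.mutual_cond _ _).1 (h i), matchingOf]
  cases μ; cases hh : matchingOf (σM.symm.trans σW); simp_all

/-- For the profile `P` of Example 2 (`m1 : w1,w2,w3`;
`m2 : w1,w3,w2`; `m3 : w3,w1,w2`; `w1 : m1,m2,m3`; `w2 : m1,m3,m2`; `w3 : m3,m1,m2`,
everyone ranking unmatched last), any ex-post pairwise stable mechanism must, at any
permutation `P'` of `P` obtained by (`σM`, `σW`), output with probability 1 the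
matching pairing `σ(m_i)` with `σ(w_i)`; in particular, at every permutation of `P`,
exactly four agents get their first choices and two their third choices, with certainty. -/
theorem stable_mechanism_on_permutations_example2 (P : Profile (Fin 3) (Fin 3))
    (hm1 : MRanks P 0 ![1, 2, 3] 4) (hm2 : MRanks P 1 ![1, 3, 2] 4)
    (hm3 : MRanks P 2 ![2, 3, 1] 4)
    (hw1 : WRanks P 0 ![1, 2, 3] 4) (hw2 : WRanks P 1 ![1, 3, 2] 4)
    (hw3 : WRanks P 2 ![2, 3, 1] 4)
    (φ : Mechanism (Fin 3) (Fin 3)) (hφ : ExPostPairwiseStable φ)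
    (σM σW : Equiv.Perm (Fin 3)) (P' : Profile (Fin 3) (Fin 3))
    (hP' : IsPermutedProfile σM σW P P') :
    φ P' (matchingOf (σM.symm.trans σW)) = 1 ∧
    (Finset.univ.filter
      (fun a : Fin 3 ⊕ Fin 3 => prank P' (matchingOf (σM.symm.trans σW)) a = 1)).card = 4 ∧
    (Finset.univ.filter
      (fun a : Fin 3 ⊕ Fin 3 => prank P' (matchingOf (σM.symm.trans σW)) a = 3)).card = 2 := by
  obtain ⟨e1, e2, e3, e4⟩ := hP'
  set ν := matchingOf (σM.symm.trans σW) with hνdef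
  have hν : ∀ i, ν.toFun (Sum.inl (σM i)) = Sum.inr (σW i) := by
    intro i; simp [hνdef, matchingOf]
  have hν' : ∀ i, ν.toFun (Sum.inr (σW i)) = Sum.inl (σM i) :=
    fun i => (ν.mutual_cond _ _).1 (hν i)
  have rM : ∀ i j, mrank P' (σM i) (some (σW j)) = mrank P i (some j) := by
    intro i j; simp [mrank, e1]
  have rM0 : ∀ i, mrank P' (σM i) none = mrank P i none := by intro i; simp [mrank, e2]
  have rW : ∀ i j, wrank P' (σW i) (some (σM j)) = wrank P i (some j) := by
    intro i j; simp [wrank, e3]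
  have rW0 : ∀ i, wrank P' (σW i) none = wrank P i none := by intro i; simp [wrank, e4]
  have pM : ∀ i, prank P' ν (Sum.inl (σM i)) = mrank P i (some i) := by
    intro i; simp [prank, Matching.partnerM, hν, rM]
  have pW : ∀ i, prank P' ν (Sum.inr (σW i)) = wrank P i (some i) := by
    intro i; simp [prank, Matching.partnerW, hν', rW]
  have a0 : mrank P 0 (some 0) = 1 := hm1.1 0
  have a1 : mrank P 1 (some 1) = 3 := hm2.1 1
  have a2 : mrank P 2 (some 2) = 1 := hm3.1 2
  have b0 : wrank P 0 (some 0) = 1 := hw1.1 0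
  have b1 : wrank P 1 (some 1) = 3 := hw2.1 1
  have b2 : wrank P 2 (some 2) = 1 := hw3.1 2
  have pos : ∀ (μ : Matching (Fin 3) (Fin 3)) a, 1 ≤ prank P' μ a := by
    intro μ a; cases a <;> simp [prank, mrank, wrank]
  have k0 := forced hφ P' ν (σM 0) (σW 0) (hν 0)
    (fun μ _ => by rw [pM, a0]; exact pos _ _) (fun μ _ => by rw [pW, b0]; exact pos _ _)
  have k2 := forced hφ P' ν (σM 2) (σW 2) (hν 2)
    (fun μ _ => by rw [pM, a2]; exact pos _ _) (fun μ _ => by rw [pW, b2]; exact pos _ _)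
  have k1 := forced hφ P' ν (σM 1) (σW 1) (hν 1)
    (fun μ hμ => by
      rw [pM, a1]
      rcases μ.man_range (σM 1) with h | ⟨w, h⟩
      · simp only [prank, Matching.partnerM, h, rM0, hm2.2]; norm_num
      · obtain ⟨j, rfl⟩ := σW.surjective w
        have h' := (μ.mutual_cond _ _).1 h
        have h0 := (μ.mutual_cond _ _).1 (k0 μ hμ)
        have h2 := (μ.mutual_cond _ _).1 (k2 μ hμ)
        have hj : j = 1 := by
          fin_cases j
          · simp [h0] at h'
          · rfl
          · simp [h2] at h'
        subst hj
        simp only [prank, Matching.partnerM, h, rM, a1]; norm_num)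
    (fun μ hμ => by
      rw [pW, b1]
      rcases μ.woman_range (σW 1) with h | ⟨m, h⟩
      · simp only [prank, Matching.partnerW, h, rW0, hw2.2]; norm_num
      · obtain ⟨j, rfl⟩ := σM.surjective m
        have h' := (μ.mutual_cond _ _).2 h
        have h0 := k0 μ hμ
        have h2 := k2 μ hμ
        have hj : j = 1 := by
          fin_cases j
          · simp [h0] at h'
          · rfl
          · simp [h2] at h'
        subst hj
        simp only [prank, Matching.partnerW, h, rW, b1]; norm_num)
  have hall : ∀ μ ∈ (φ P').support, μ = ν := by
    intro μ hμ
    refine matching_eq μ σM σW fun i => ?_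
    fin_cases i
    · exact k0 μ hμ
    · exact k1 μ hμ
    · exact k2 μ hμ
  refine ⟨?_, ?_, ?_⟩
  · rw [PMF.apply_eq_one_iff]
    exact (Set.Nonempty.subset_singleton_iff (φ P').support_nonempty).1 hall
  · rw [Finset.card_filter, Fintype.sum_sum_type, ← Equiv.sum_comp σM (fun x => if prank P' ν (Sum.inl x) = 1 then 1 else 0),
      ← Equiv.sum_comp σW (fun x => if prank P' ν (Sum.inr x) = 1 then 1 else 0)]
    simp only [pM, pW]
    simp only [Fin.sum_univ_three, a0, a1, a2, b0, b1, b2]; norm_num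
  · rw [Finset.card_filter, Fintype.sum_sum_type, ← Equiv.sum_comp σM (fun x => if prank P' ν (Sum.inl x) = 3 then 1 else 0),
      ← Equiv.sum_comp σW (fun x => if prank P' ν (Sum.inr x) = 3 then 1 else 0)]
    simp only [pM, pW]
    simp only [Fin.sum_univ_three, a0, a1, a2, b0, b1, b2]; norm_num

end Unraveling
end
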